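/- 𝔏(SL(2,ℤ)) is a proper subset of 𝔏(SL(3,ℤ)): every language recognized by an SL(2,ℤ)-automaton is recognized by an SL(3,ℤ)-automaton, and the language MULT = { xᵖ y^q z^{pq} : p, q ≥ 0 } over the alphabet {x, y, z} is recognized by an SL(3,ℤ)-automaton but by no SL(2,ℤ)-automaton. -/

import Mathlib

/-- A `G`-automaton over input alphabet `α`: a nondeterministic finite automaton
equipped with a register holding an element of the group `G`. -/
structure GAutomaton (α : Type*) (G : Type*) [Group G] where
  /-- the (finite) state set -/
  Q : Type
  finQ : Finite Q
  /-- the initial state -/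
  q0 : Q
  /-- the accepting states -/
  acc : Set Q
  /-- the (finite) transition relation; `none` stands for ε -/
  δ : Set (Q × Option α × Q × G)
  finδ : δ.Finite

namespace GAutomaton

variable {α : Type*} {G : Type*} [Group G]

/-- One computation step between configurations `(state, register, remaining input)`. -/
def Step (M : GAutomaton α G) (c c' : M.Q × G × List α) : Prop :=
  ∃ σ m, (c.1, σ, c'.1, m) ∈ M.δ ∧ c'.2.1 = c.2.1 * m ∧
    match σ with
    | none => c'.2.2 = c.2.2
    | some s => c.2.2 = s :: c'.2.2

/-- `M.StepsIn k c c'` : configuration `c'` is reachable from `c` in exactly `k` steps. -/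
def StepsIn (M : GAutomaton α G) : ℕ → (M.Q × G × List α) → (M.Q × G × List α) → Prop
  | 0, c, c' => c = c'
  | n + 1, c, c' => ∃ d, M.Step c d ∧ M.StepsIn n d c'

/-- `M` accepts the word `w` within `t` computation steps. -/
def AcceptsIn (M : GAutomaton α G) (w : List α) (t : ℕ) : Prop :=
  ∃ k ≤ t, ∃ q ∈ M.acc, M.StepsIn k (M.q0, 1, w) (q, 1, [])

/-- The language recognized by `M`. -/
def lang (M : GAutomaton α G) : Language α := {w | ∃ t, M.AcceptsIn w t}

/-- `M` is real-time if every transition consumes an input symbol. -/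
def RealTime (M : GAutomaton α G) : Prop := ∀ tr ∈ M.δ, tr.2.1 ≠ none

end GAutomaton

/-- `L ∈ 𝔏(G)` : the language `L` is recognized by some `G`-automaton. -/
def GRecognizable (G : Type*) [Group G] {α : Type*} (L : Language α) : Prop :=
  ∃ M : GAutomaton α G, M.lang = L

/-- `L ∈ 𝔏(G)ʷ_{t(n)}` : `L` is recognized by a weakly `t(n)` time-bounded `G`-automaton. -/
def GRecognizableInTime (G : Type*) [Group G] {α : Type*} (L : Language α) (t : ℕ → ℕ) : Prop :=
  ∃ M : GAutomaton α G, M.lang = L ∧ ∀ w ∈ L, M.AcceptsIn w (t w.length)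

/-- `L ∈ 𝔏(G)ʷ_{O(n)}` : `L` is recognized by a weakly linear-time bounded `G`-automaton. -/
def GRecognizableLinTime (G : Type*) [Group G] {α : Type*} (L : Language α) : Prop :=
  ∃ C : ℕ, GRecognizableInTime G L (fun n => C * n + C)

/-- The language `MULT = { xᵖ yᑫ z^{pq} : p, q ≥ 0 }` over the alphabet `{x, y, z}`
(encoded as `0, 1, 2 : Fin 3`). -/
def MULT : Language (Fin 3) :=
  {w | ∃ p q : ℕ,
    w = List.replicate p 0 ++ List.replicate q 1 ++ List.replicate (p * q) 2}

/-!
In the Heisenberg group inside `SL(3, ℤ)`, the central element `Z = [X, Y]` makes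
`Xᵖ Yᑫ Z⁻ʳ X⁻ᵐ Y⁻ⁿ = 1` equivalent to `m = p`, `n = q` and `r = p * q`.

On the other side, `SL(2, ℤ)` is an amalgamated product of the finite groups `⟨S⟩` and `⟨V⟩`, where
`V` rotates a Farey triangle, and so acts on a tree. An edge of that tree cuts it into two
half-spaces; since a closed path has to cross the edge back wherever it crosses it, every polygon
with sides in `⟨S⟩ ∪ ⟨V⟩` can be triangulated with diagonals in `⟨S⟩ ∪ ⟨V⟩`. The accepting
computations of an `SL(2, ℤ)`-automaton, closed up to polygons, thereby become parse trees of a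
context-free grammar, and pumping down shortens every long word of its language by a bounded
positive number of letters. In `MULT`, lowering `p` by one deletes at least `q` letters and vice
versa, which is not bounded.
-/

section LabelledPath

variable {X G α : Type*}

/-- Paths in a directed graph on `X` whose edges carry a register operation in `G` and a word over
`α`: `E x y g u` says that there is an edge from `x` to `y` with label `g` that reads `u`.
`LabelledPath E x y l w` means that some path from `x` to `y` has the list of labels `l` and reads
the word `w`. -/
inductive LabelledPath (E : X → X → G → List α → Prop) : X → X → List G → List α → Prop
  | nil (x : X) : LabelledPath E x x [] []
  | cons {x y z : X} {g : G} {l : List G} {u v : List α} (he : E x y g u)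
      (h : LabelledPath E y z l v) : LabelledPath E x z (g :: l) (u ++ v)

/-- `Reaches E x y g w`: some path from `x` to `y` reads `w` and multiplies the register by `g`. -/
def Reaches [Mul G] [One G] (E : X → X → G → List α → Prop) (x y : X) (g : G) (w : List α) : Prop :=
  ∃ l, LabelledPath E x y l w ∧ l.prod = g

variable {E : X → X → G → List α → Prop}

theorem LabelledPath.exists_of_append {l₁ l₂ : List G} {x z : X} {w : List α}
    (h : LabelledPath E x z (l₁ ++ l₂) w) :
    ∃ y u v, LabelledPath E x y l₁ u ∧ LabelledPath E y z l₂ v ∧ w = u ++ v := by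
  induction l₁ generalizing x w with
  | nil => exact ⟨x, [], w, .nil x, h, rfl⟩
  | cons g l₁ ih =>
    cases h with
    | cons he h =>
      obtain ⟨y, u, v, h₁, h₂, rfl⟩ := ih h
      exact ⟨y, _, v, .cons he h₁, h₂, (List.append_assoc ..).symm⟩

theorem LabelledPath.label_mem {B : Set G} (hB : ∀ x y g u, E x y g u → g ∈ B) {x y : X}
    {l : List G} {w : List α} (h : LabelledPath E x y l w) : ∀ g ∈ l, g ∈ B := by
  induction h with
  | nil => simp
  | cons he _ ih => exact List.forall_mem_cons.2 ⟨hB _ _ _ _ he, ih⟩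

theorem LabelledPath.word_length_le (hE : ∀ x y g u, E x y g u → u.length ≤ 1) {x y : X}
    {l : List G} {w : List α} (h : LabelledPath E x y l w) : w.length ≤ l.length := by
  induction h with
  | nil => rfl
  | cons he _ ih =>
    have := hE _ _ _ _ he
    simp only [List.length_append, List.length_cons]
    lia

variable [Monoid G] {x y z : X} {g h : G} {u v : List α}

theorem Reaches.refl (x : X) : Reaches E x x 1 [] := ⟨[], .nil x, rfl⟩

theorem Reaches.head (he : E x y g u) (hr : Reaches E y z h v) :
    Reaches E x z (g * h) (u ++ v) := by
  obtain ⟨l, hl, rfl⟩ := hr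
  exact ⟨g :: l, .cons he hl, List.prod_cons⟩

@[elab_as_elim]
theorem Reaches.head_induction {P : ∀ x g u, Reaches E x z g u → Prop} (hr : Reaches E x z g u)
    (refl : P z 1 [] (.refl z))
    (head : ∀ {x y g h u v} (he : E x y g u) (hr : Reaches E y z h v),
      P y h v hr → P x (g * h) (u ++ v) (hr.head he)) : P x g u hr := by
  obtain ⟨l, hl, rfl⟩ := hr
  induction hl with
  | nil => exact refl
  | cons he hl ih => exact head he ⟨_, hl, rfl⟩ (ih refl head)

theorem Reaches.trans (hr : Reaches E x y g u) (hs : Reaches E y z h v) :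
    Reaches E x z (g * h) (u ++ v) := by
  induction hr using Reaches.head_induction with
  | refl => simpa using hs
  | head he _ ih => simpa [mul_assoc] using Reaches.head he ih

theorem Reaches.loop (he : E x x g u) (n : ℕ) :
    Reaches E x x (g ^ n) (List.replicate n u).flatten := by
  induction n with
  | zero => simpa using Reaches.refl x
  | succ n ih => simpa [pow_succ', List.replicate_succ] using Reaches.head he ih

theorem reaches_map_iff {H : Type*} [Monoid H] (f : G →* H) {k : H} :
    Reaches (fun x y k u => ∃ g, f g = k ∧ E x y g u) x y k u ↔
      ∃ g, f g = k ∧ Reaches E x y g u := by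
  constructor
  · intro hr
    induction hr using Reaches.head_induction with
    | refl => exact ⟨1, map_one f, .refl y⟩
    | head he _ ih =>
      obtain ⟨m, rfl, he⟩ := he
      obtain ⟨g, rfl, hr⟩ := ih
      exact ⟨m * g, map_mul f m g, hr.head he⟩
  · rintro ⟨g, rfl, hr⟩
    induction hr using Reaches.head_induction with
    | refl => simpa using Reaches.refl y
    | head he _ ih => simpa using ih.head ⟨_, rfl, he⟩

end LabelledPath

namespace GAutomaton

variable {α G H : Type*} [Group G] [Group H]

/-- The transition relation of an automaton as a labelled graph. -/
def Edge (M : GAutomaton α G) (q q' : M.Q) (m : G) (u : List α) : Prop :=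
  ∃ σ : Option α, (q, σ, q', m) ∈ M.δ ∧ u = σ.toList

theorem step_iff (M : GAutomaton α G) {q q' : M.Q} {x y : G} {w w' : List α} :
    M.Step (q, x, w) (q', y, w') ↔ ∃ m u, M.Edge q q' m u ∧ y = x * m ∧ w = u ++ w' := by
  constructor
  · rintro ⟨_ | s, m, hδ, hy, hw⟩
    · exact ⟨m, [], ⟨none, hδ, rfl⟩, hy, hw.symm⟩
    · exact ⟨m, [s], ⟨some s, hδ, rfl⟩, hy, hw⟩
  · rintro ⟨m, _, ⟨_ | s, hδ, rfl⟩, hy, hw⟩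
    · exact ⟨none, m, hδ, hy, hw.symm⟩
    · exact ⟨some s, m, hδ, hy, hw⟩

theorem exists_stepsIn_iff (M : GAutomaton α G) {q q' : M.Q} {x y : G} {w : List α} :
    (∃ k, M.StepsIn k (q, x, w) (q', y, [])) ↔ ∃ g, Reaches M.Edge q q' g w ∧ y = x * g := by
  constructor
  · rintro ⟨k, hk⟩
    induction k generalizing q x w with
    | zero =>
      obtain ⟨rfl, rfl, rfl⟩ : q = q' ∧ x = y ∧ w = [] := by simpa [StepsIn] using hk
      exact ⟨1, .refl q, (mul_one x).symm⟩
    | succ k ih =>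
      obtain ⟨⟨q₁, x₁, w₁⟩, hstep, hsteps⟩ := hk
      obtain ⟨m, u, he, rfl, rfl⟩ := M.step_iff.1 hstep
      obtain ⟨g, hr, rfl⟩ := ih hsteps
      exact ⟨m * g, hr.head he, mul_assoc ..⟩
  · rintro ⟨g, hr, rfl⟩
    induction hr using Reaches.head_induction generalizing x with
    | refl => exact ⟨0, by simp [StepsIn]⟩
    | @head q q₁ m g u v he _ ih =>
      obtain ⟨k, hk⟩ := ih (x := x * m)
      exact ⟨k + 1, (q₁, x * m, v), M.step_iff.2 ⟨m, u, he, rfl, rfl⟩, by rwa [← mul_assoc]⟩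

theorem mem_lang_iff (M : GAutomaton α G) {w : List α} :
    w ∈ M.lang ↔ ∃ q ∈ M.acc, Reaches M.Edge M.q0 q 1 w := by
  have hacc (q : M.Q) :
      (∃ k, M.StepsIn k (M.q0, 1, w) (q, 1, [])) ↔ Reaches M.Edge M.q0 q 1 w := by
    simp [exists_stepsIn_iff, eq_comm]
  simp only [← hacc]
  exact ⟨fun ⟨_, k, _, q, hq, hk⟩ => ⟨q, hq, k, hk⟩,
    fun ⟨q, hq, k, hk⟩ => ⟨k, k, le_rfl, q, hq, hk⟩⟩

/-- Push the register operations of an automaton forward along a group homomorphism. -/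
def map (f : G →* H) (M : GAutomaton α G) : GAutomaton α H where
  Q := M.Q
  finQ := M.finQ
  q0 := M.q0
  acc := M.acc
  δ := (fun t => (t.1, t.2.1, t.2.2.1, f t.2.2.2)) '' M.δ
  finδ := M.finδ.image _

theorem edge_map (f : G →* H) (M : GAutomaton α G) :
    (M.map f).Edge = fun (q q' : M.Q) h u => ∃ g, f g = h ∧ M.Edge q q' g u := by
  ext q q' h u
  constructor
  · rintro ⟨σ, ⟨⟨_, _, _, g⟩, hδ, heq⟩, rfl⟩
    cases heq
    exact ⟨g, rfl, _, hδ, rfl⟩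
  · rintro ⟨g, rfl, σ, hδ, rfl⟩
    exact ⟨σ, ⟨_, hδ, rfl⟩, rfl⟩

theorem lang_map {f : G →* H} (hf : Function.Injective f) (M : GAutomaton α G) :
    (M.map f).lang = M.lang := by
  ext w
  rw [mem_lang_iff, mem_lang_iff, edge_map]
  refine exists_congr fun q => and_congr_right fun _ => (reaches_map_iff f).trans ?_
  simp only [map_eq_one_iff f hf, exists_eq_left]
  rfl

end GAutomaton

theorem GRecognizable.of_injective {α G H : Type*} [Group G] [Group H] {L : Language α}
    (f : G →* H) (hf : Function.Injective f) (h : GRecognizable G L) : GRecognizable H L := by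
  obtain ⟨M, rfl⟩ := h
  exact ⟨M.map f, M.lang_map hf⟩

section BlockEmbedding

open Matrix

variable {m n k R : Type*} [Fintype m] [DecidableEq m] [Fintype n] [DecidableEq n] [Fintype k]
  [DecidableEq k] [CommRing R]

/-- The embedding of `SL(m, R)` into `SL(k, R)` as upper left block, where `e` splits off the
indices on which the image acts as the identity. -/
def slBlockHom (e : m ⊕ n ≃ k) :
    Matrix.SpecialLinearGroup m R →* Matrix.SpecialLinearGroup k R where
  toFun g := ⟨reindexAlgEquiv R R e (fromBlocks g 0 0 1), by simp⟩
  map_one' := Subtype.ext (by simp)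
  map_mul' g h := by
    have hmul : (fromBlocks (↑(g * h)) 0 0 1 : Matrix (m ⊕ n) (m ⊕ n) R) =
        fromBlocks ↑g 0 0 1 * fromBlocks ↑h 0 0 1 := by
      simp [fromBlocks_multiply]
    exact Subtype.ext ((congrArg (reindexAlgEquiv R R e) hmul).trans (map_mul _ _ _))

theorem slBlockHom_injective (e : m ⊕ n ≃ k) :
    Function.Injective
      (slBlockHom e : Matrix.SpecialLinearGroup m R →* Matrix.SpecialLinearGroup k R) :=
  fun _ _ hgh => Subtype.ext
    (fromBlocks_inj.1 ((reindexAlgEquiv R R e).injective (congrArg Subtype.val hgh))).1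

end BlockEmbedding

section Heisenberg

variable {R : Type*} [CommRing R]

/-- The element of the Heisenberg group with first row `1, a, c` and second row `0, 1, b`. -/
def heis (a b c : R) : Matrix.SpecialLinearGroup (Fin 3) R :=
  ⟨!![1, a, c; 0, 1, b; 0, 0, 1], by simp [Matrix.det_fin_three]⟩

theorem coe_heis (a b c : R) :
    (heis a b c : Matrix (Fin 3) (Fin 3) R) = !![1, a, c; 0, 1, b; 0, 0, 1] := rfl

theorem heis_mul (a b c a' b' c' : R) :
    heis a b c * heis a' b' c' = heis (a + a') (b + b') (c + c' + a * b') := by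
  ext i j
  rw [Matrix.SpecialLinearGroup.coe_mul, coe_heis, coe_heis, coe_heis]
  fin_cases i <;> fin_cases j <;>
    simp [Matrix.mul_apply, Fin.sum_univ_three, add_comm, add_assoc]

theorem heis_eq_one_iff {a b c : R} : heis a b c = 1 ↔ a = 0 ∧ b = 0 ∧ c = 0 := by
  constructor
  · intro h
    have hentry (i j : Fin 3) := congrFun₂ (congrArg Subtype.val h) i j
    exact ⟨by simpa [heis] using hentry 0 1, by simpa [heis] using hentry 1 2,
      by simpa [heis] using hentry 0 2⟩
  · rintro ⟨rfl, rfl, rfl⟩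
    ext i j
    fin_cases i <;> fin_cases j <;> simp [heis]

theorem heis_pow {a b c : R} (hab : a * b = 0) (n : ℕ) :
    heis a b c ^ n = heis (n * a) (n * b) (n * c) := by
  induction n with
  | zero => simpa using (heis_eq_one_iff.2 ⟨rfl, rfl, rfl⟩).symm
  | succ n ih =>
    rw [pow_succ, ih, heis_mul, mul_assoc, hab]
    congr 1 <;> push_cast <;> ring

end Heisenberg

section LoopAutomaton

variable {α G : Type*} [Group G] {k : ℕ}

/-- The automaton with states `0, …, k` in a row that can loop at its `i`-th state, reading and
multiplying by `f i`, or proceed to the next state without reading anything; it accepts in its last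
state. -/
def loopAutomaton (f : Fin k → Option α × G) : GAutomaton α G where
  Q := Fin (k + 1)
  finQ := inferInstance
  q0 := 0
  acc := {Fin.last k}
  δ := Set.range (fun i : Fin k => (i.castSucc, (f i).1, i.castSucc, (f i).2)) ∪
    Set.range (fun i : Fin k => (i.castSucc, none, i.succ, 1))
  finδ := (Set.finite_range _).union (Set.finite_range _)

/-- The transitions of `loopAutomaton f` as a labelled graph. -/
def LoopEdge (f : Fin k → Option α × G) (x y : Fin (k + 1)) (g : G) (u : List α) : Prop :=
  ∃ i : Fin k, x = i.castSucc ∧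
    (y = i.castSucc ∧ g = (f i).2 ∧ u = (f i).1.toList ∨ y = i.succ ∧ g = 1 ∧ u = [])

theorem loopAutomaton_edge (f : Fin k → Option α × G) :
    (loopAutomaton f).Edge = LoopEdge f := by
  ext x y g u
  constructor
  · rintro ⟨σ, ⟨i, h⟩ | ⟨i, h⟩, rfl⟩ <;> cases h
    · exact ⟨i, rfl, .inl ⟨rfl, rfl, rfl⟩⟩
    · exact ⟨i, rfl, .inr ⟨rfl, rfl, rfl⟩⟩
  · rintro ⟨i, rfl, ⟨rfl, rfl, rfl⟩ | ⟨rfl, rfl, rfl⟩⟩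
    · exact ⟨_, .inl ⟨i, rfl⟩, rfl⟩
    · exact ⟨none, .inr ⟨i, rfl⟩, rfl⟩

theorem reaches_loopEdge_last_iff (f : Fin k → Option α × G) {g : G} {w : List α} :
    Reaches (LoopEdge f) (Fin.last k) (Fin.last k) g w ↔ g = 1 ∧ w = [] := by
  constructor
  · rintro ⟨_, _ | ⟨he, -⟩, rfl⟩
    · exact ⟨rfl, rfl⟩
    · obtain ⟨i, hi, -⟩ := he
      exact absurd hi.symm i.castSucc_ne_last
  · rintro ⟨rfl, rfl⟩
    exact .refl _

theorem reaches_loopEdge_castSucc_iff (f : Fin k → Option α × G) (i : Fin k) {g : G}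
    {w : List α} : Reaches (LoopEdge f) i.castSucc (Fin.last k) g w ↔
      ∃ n g' w', Reaches (LoopEdge f) i.succ (Fin.last k) g' w' ∧
        g = (f i).2 ^ n * g' ∧ w = (List.replicate n (f i).1.toList).flatten ++ w' := by
  constructor
  · generalize hx : i.castSucc = x
    intro hr
    induction hr using Reaches.head_induction with
    | refl => exact absurd hx i.castSucc_ne_last
    | head he hr ih =>
      obtain ⟨j, rfl, ⟨rfl, rfl, rfl⟩ | ⟨rfl, rfl, rfl⟩⟩ := he <;>
        obtain rfl := Fin.castSucc_injective _ hx
      · obtain ⟨n, g', w', hr', rfl, rfl⟩ := ih rfl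
        exact ⟨n + 1, g', w', hr', by rw [pow_succ', mul_assoc], by simp [List.replicate_succ]⟩
      · exact ⟨0, _, _, hr, by simp, by simp⟩
  · rintro ⟨n, g', w', hr, rfl, rfl⟩
    have hloop : LoopEdge f i.castSucc i.castSucc _ _ := ⟨i, rfl, .inl ⟨rfl, rfl, rfl⟩⟩
    have hexit : LoopEdge f i.castSucc i.succ _ _ := ⟨i, rfl, .inr ⟨rfl, rfl, rfl⟩⟩
    simpa using (Reaches.loop hloop n).trans (hr.head hexit)

theorem mem_lang_loopAutomaton_iff (f : Fin k → Option α × G) {w : List α} :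
    w ∈ (loopAutomaton f).lang ↔ Reaches (LoopEdge f) 0 (Fin.last k) 1 w := by
  rw [GAutomaton.mem_lang_iff, loopAutomaton_edge]
  exact exists_eq_left

end LoopAutomaton

/-- The five loops `X`, `Y`, `Z⁻¹`, `X⁻¹`, `Y⁻¹` in the Heisenberg group, the first three of which
read the letters of `MULT`. -/
def multLoops : Fin 5 → Option (Fin 3) × Matrix.SpecialLinearGroup (Fin 3) ℤ :=
  ![(some 0, heis 1 0 0), (some 1, heis 0 1 0), (some 2, heis 0 0 (-1)),
    (none, heis (-1) 0 0), (none, heis 0 (-1) 0)]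

theorem multLoops_prod_eq_one_iff {p q r m n : ℕ} :
    heis (1 : ℤ) 0 0 ^ p * (heis 0 1 0 ^ q * (heis 0 0 (-1) ^ r *
      (heis (-1) 0 0 ^ m * (heis 0 (-1) 0 ^ n * 1)))) = 1 ↔ r = p * q ∧ m = p ∧ n = q := by
  have hprod : heis (1 : ℤ) 0 0 ^ p * (heis 0 1 0 ^ q * (heis 0 0 (-1) ^ r *
      (heis (-1) 0 0 ^ m * (heis 0 (-1) 0 ^ n * 1)))) =
      heis (p - m : ℤ) (q - n) (p * (q - n) + m * n - r) := by
    simp only [mul_one, heis_pow, heis_mul, zero_mul, mul_zero]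
    congr 1 <;> ring
  rw [hprod, heis_eq_one_iff]
  constructor
  · rintro ⟨hm, hn, hr⟩
    obtain rfl : m = p := by lia
    obtain rfl : n = q := by lia
    exact ⟨by zify; linear_combination -hr, rfl, rfl⟩
  · rintro ⟨rfl, rfl, rfl⟩
    exact ⟨by ring, by ring, by push_cast; ring⟩

theorem lang_loopAutomaton_multLoops : (loopAutomaton multLoops).lang = MULT := by
  ext w
  rw [mem_lang_loopAutomaton_iff]
  have hstate := reaches_loopEdge_castSucc_iff multLoops
  constructor
  · intro h₀
    obtain ⟨p, _, _, h₁, hprod, rfl⟩ := (hstate 0).1 h₀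
    obtain ⟨q, _, _, h₂, rfl, rfl⟩ := (hstate 1).1 h₁
    obtain ⟨r, _, _, h₃, rfl, rfl⟩ := (hstate 2).1 h₂
    obtain ⟨m, _, _, h₄, rfl, rfl⟩ := (hstate 3).1 h₃
    obtain ⟨n, _, _, h₅, rfl, rfl⟩ := (hstate 4).1 h₄
    obtain ⟨rfl, rfl⟩ := (reaches_loopEdge_last_iff multLoops).1 h₅
    obtain ⟨rfl, rfl, rfl⟩ := multLoops_prod_eq_one_iff.1 hprod.symm
    exact ⟨m, n, by simp [multLoops]⟩
  · rintro ⟨p, q, rfl⟩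
    refine (hstate 0).2 ⟨p, _, _, (hstate 1).2 ⟨q, _, _, (hstate 2).2 ⟨p * q, _, _,
      (hstate 3).2 ⟨p, _, _, (hstate 4).2 ⟨q, _, _, (reaches_loopEdge_last_iff multLoops).2
      ⟨rfl, rfl⟩, rfl, rfl⟩, rfl, rfl⟩, rfl, rfl⟩, rfl, rfl⟩,
      (multLoops_prod_eq_one_iff.2 ⟨rfl, rfl, rfl⟩).symm, by simp [multLoops]⟩

/-- A language is shrinkable by `N` if every word longer than `N` can be shortened by at least one
and at most `N` letters, deleting letters in place, without leaving the language. -/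
def ShrinkableBy {α : Type*} (N : ℕ) (L : Language α) : Prop :=
  ∀ w ∈ L, N < w.length → ∃ w' ∈ L, w'.Sublist w ∧ w'.length < w.length ∧ w.length ≤ w'.length + N

/-- A context-free grammar with nonterminals `V` whose productions are binary, up to terminal
productions `A → u`, recorded by `leaf A u`; `branch A B C` is the production `A → BC`. Neither kind
needs to be finite in number. -/
structure BinaryGrammar (V α : Type*) where
  leaf : V → List α → Prop
  branch : V → V → V → Prop

namespace BinaryGrammar

variable {V α : Type*}

/-- `Γ.Yields A w`: the word `w` has a parse tree with root `A`. -/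
inductive Yields (Γ : BinaryGrammar V α) : V → List α → Prop
  | leaf {A : V} {u : List α} (h : Γ.leaf A u) : Yields Γ A u
  | branch {A B C : V} {u v : List α} (h : Γ.branch A B C) (hu : Yields Γ B u)
      (hv : Yields Γ C v) : Yields Γ A (u ++ v)

/-- `Γ.Subtree A w B u`: some parse tree of `w` with root `A` has a subtree with root `B` and yield
`u`. All that is recorded of it is that `u` can be replaced by any other yield of `B`. -/
def Subtree (Γ : BinaryGrammar V α) (A : V) (w : List α) (B : V) (u : List α) : Prop :=
  Γ.Yields B u ∧ ∃ c₁ c₂, w = c₁ ++ u ++ c₂ ∧ ∀ u', Γ.Yields B u' → Γ.Yields A (c₁ ++ u' ++ c₂)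

variable {Γ : BinaryGrammar V α} {A B C : V} {u v w : List α}

theorem Yields.subtree_refl (h : Γ.Yields A w) : Γ.Subtree A w A w :=
  ⟨h, [], [], by simp, by simp⟩

theorem Subtree.trans (h : Γ.Subtree A w B u) (h' : Γ.Subtree B u C v) : Γ.Subtree A w C v := by
  obtain ⟨-, c₁, c₂, rfl, hc⟩ := h
  obtain ⟨hv, d₁, d₂, rfl, hd⟩ := h'
  exact ⟨hv, c₁ ++ d₁, d₂ ++ c₂, by simp, fun v' hv' => by simpa using hc _ (hd v' hv')⟩

theorem Subtree.length_le (h : Γ.Subtree A w B u) : u.length ≤ w.length := by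
  obtain ⟨-, c₁, c₂, rfl, -⟩ := h
  simp only [List.length_append]
  lia

theorem subtree_left (h : Γ.branch A B C) (hu : Γ.Yields B u) (hv : Γ.Yields C v) :
    Γ.Subtree A (u ++ v) B u :=
  ⟨hu, [], v, by simp, fun _ hu' => .branch h hu' hv⟩

theorem subtree_right (h : Γ.branch A B C) (hu : Γ.Yields B u) (hv : Γ.Yields C v) :
    Γ.Subtree A (u ++ v) C v :=
  ⟨hv, u, [], by simp, fun _ hv' => by simpa using Yields.branch h hu hv'⟩

theorem Yields.exists_heavy_subtree (hleaf : ∀ A u, Γ.leaf A u → u.length ≤ 1)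
    (h : Γ.Yields A w) (hw : 1 < w.length) :
    ∃ B u, Γ.Subtree A w B u ∧ u.length < w.length ∧ w.length ≤ 2 * u.length := by
  induction h with
  | leaf h => exact absurd hw (hleaf _ _ h).not_gt
  | @branch A B C u v h hu hv ihu ihv =>
    have hleft := subtree_left h hu hv
    have hright := subtree_right h hu hv
    rw [List.length_append] at *
    rcases u.length.eq_zero_or_pos with hu₀ | hu₀
    · obtain ⟨D, x, hx, hlt, hle⟩ := ihv (by lia)
      exact ⟨D, x, hright.trans hx, by lia, by lia⟩
    rcases v.length.eq_zero_or_pos with hv₀ | hv₀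
    · obtain ⟨D, x, hx, hlt, hle⟩ := ihu (by lia)
      exact ⟨D, x, hleft.trans hx, by lia, by lia⟩
    rcases le_total u.length v.length with huv | hvu
    · exact ⟨C, v, hright, by lia, by lia⟩
    · exact ⟨B, u, hleft, by lia, by lia⟩

theorem Yields.exists_subtree_length_mem_Ioc (hleaf : ∀ A u, Γ.leaf A u → u.length ≤ 1) {m : ℕ}
    (hm : 1 ≤ m) {A : V} {w : List α} (h : Γ.Yields A w) (hw : m < w.length) :
    ∃ B u, Γ.Subtree A w B u ∧ u.length ∈ Set.Ioc m (2 * m) := by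
  by_cases hle : w.length ≤ 2 * m
  · exact ⟨A, w, h.subtree_refl, hw, hle⟩
  · obtain ⟨B, u, hu, _, hle'⟩ := h.exists_heavy_subtree hleaf (by lia)
    obtain ⟨C, v, hv, hmem⟩ := hu.1.exists_subtree_length_mem_Ioc hleaf hm (by lia)
    exact ⟨C, v, hu.trans hv, hmem⟩
termination_by w.length

/-- Descend along heavy subtrees, removing from `U` each nonterminal that is met. -/
theorem Yields.exists_notMem_or_repeat (hleaf : ∀ A u, Γ.leaf A u → u.length ≤ 1) (U : Finset V)
    {A : V} {w : List α} (h : Γ.Yields A w) (hw : 2 ^ U.card < w.length) :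
    (∃ B ∉ U, ∃ u, Γ.Subtree A w B u) ∨
      ∃ B u v, Γ.Subtree A w B u ∧ Γ.Subtree B u B v ∧ v.length < u.length := by
  classical
  by_cases hA : A ∈ U
  · have hcard := Finset.card_erase_add_one hA
    have hpow : 2 ^ U.card = 2 * 2 ^ (U.erase A).card := by rw [← hcard, pow_succ']
    have hpos := Nat.one_le_two_pow (n := (U.erase A).card)
    obtain ⟨B, u, hu, hlt, hle⟩ := h.exists_heavy_subtree hleaf (by lia)
    rcases hu.1.exists_notMem_or_repeat hleaf (U.erase A) (by lia) with
      ⟨C, hC, v, hv⟩ | ⟨C, v, v', hv, hrepeat⟩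
    · by_cases hCA : C = A
      · subst hCA
        exact .inr ⟨C, w, v, h.subtree_refl, hu.trans hv, hv.length_le.trans_lt hlt⟩
      · exact .inl ⟨C, fun hCU => hC (Finset.mem_erase.2 ⟨hCA, hCU⟩), v, hu.trans hv⟩
    · exact .inr ⟨C, v, v', hu.trans hv, hrepeat⟩
  · exact .inl ⟨A, hA, w, h.subtree_refl⟩
termination_by U.card

theorem exists_shrinkableBy [Finite V] (hleaf : ∀ A u, Γ.leaf A u → u.length ≤ 1) (A : V) :
    ∃ N, ShrinkableBy N {w | Γ.Yields A w} := by
  have := Fintype.ofFinite V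
  refine ⟨2 * 2 ^ Fintype.card V, fun w hw hlong => ?_⟩
  obtain ⟨B, u, ⟨hu, c₁, c₂, rfl, hc⟩, hlower, hupper⟩ :=
    hw.exists_subtree_length_mem_Ioc hleaf (m := 2 ^ Fintype.card V) Nat.one_le_two_pow
      (by lia)
  rcases hu.exists_notMem_or_repeat hleaf Finset.univ hlower with
    ⟨C, hC, -⟩ | ⟨C, _, v, ⟨-, d₁, d₂, rfl, hd⟩, ⟨hv, e₁, e₂, rfl, -⟩, hshort⟩
  · exact absurd (Finset.mem_univ C) hC
  refine ⟨c₁ ++ (d₁ ++ v ++ d₂) ++ c₂, hc _ (hd v hv), ?_, ?_, ?_⟩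
  · gcongr
    simp
  all_goals
    simp only [List.length_append] at *
    lia

end BinaryGrammar

section Triangulation

variable {X G α : Type*} [Monoid G]

/-- `HasSplit B l`: the list `l` is the concatenation of two nonempty lists with products in `B`. -/
def HasSplit (B : Set G) (l : List G) : Prop :=
  ∃ l₁ l₂, l = l₁ ++ l₂ ∧ l₁ ≠ [] ∧ l₂ ≠ [] ∧ l₁.prod ∈ B ∧ l₂.prod ∈ B

/-- `B` triangulates if every polygon with sides in `B`, read as a relation `b₁ ⋯ bₙ = b` in `B`
with `n ≥ 2`, is cut by a diagonal in `B` into a triangle on the side `b` and two smaller polygons.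
Iterating this gives a triangulation of the polygon. -/
def Triangulates (B : Set G) : Prop :=
  ∀ l : List G, (∀ b ∈ l, b ∈ B) → 2 ≤ l.length → l.prod ∈ B → HasSplit B l

/-- The grammar with a nonterminal `(x, y, g)` for every two vertices and every register operation
`g ∈ B`, whose parse trees are the triangulated paths from `x` to `y` with product `g`; their leaves
are the paths of length at most one. -/
def pathGrammar (E : X → X → G → List α → Prop) (B : Set G) : BinaryGrammar (X × X × B) α where
  leaf A u := ∃ l, LabelledPath E A.1 A.2.1 l u ∧ l.prod = A.2.2 ∧ l.length ≤ 1
  branch A A₁ A₂ := A₁.1 = A.1 ∧ A₁.2.1 = A₂.1 ∧ A₂.2.1 = A.2.1 ∧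
    (A₁.2.2 * A₂.2.2 : G) = A.2.2

variable {E : X → X → G → List α → Prop} {B : Set G} {w : List α}

theorem reaches_of_yields_pathGrammar {A : X × X × B} (h : (pathGrammar E B).Yields A w) :
    Reaches E A.1 A.2.1 A.2.2 w := by
  induction h with
  | leaf h =>
    obtain ⟨l, hl, hprod, -⟩ := h
    exact ⟨l, hl, hprod⟩
  | branch h _ _ ihu ihv =>
    obtain ⟨hx, hxy, hy, hg⟩ := h
    rw [← hx, ← hy, ← hg]
    exact ihu.trans (hxy ▸ ihv)

theorem LabelledPath.yields_pathGrammar (hB : Triangulates B) {x y : X} {l : List G}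
    {w : List α} (h : LabelledPath E x y l w) (hl : ∀ b ∈ l, b ∈ B) (hprod : l.prod ∈ B) :
    (pathGrammar E B).Yields (x, y, ⟨l.prod, hprod⟩) w := by
  induction hn : l.length using Nat.strong_induction_on generalizing x y l w with
  | _ n ih
  by_cases hlen : l.length ≤ 1
  · exact .leaf ⟨l, h, rfl, hlen⟩
  obtain ⟨l₁, l₂, rfl, hne₁, hne₂, hprod₁, hprod₂⟩ := hB l hl (by lia) hprod
  obtain ⟨z, u, v, h₁, h₂, rfl⟩ := h.exists_of_append
  rw [List.forall_mem_append] at hl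
  rw [List.length_append] at hn
  have hpos₁ := List.length_pos_iff.2 hne₁
  have hpos₂ := List.length_pos_iff.2 hne₂
  have hbranch : (pathGrammar E B).branch (x, y, ⟨(l₁ ++ l₂).prod, hprod⟩)
      (x, z, ⟨l₁.prod, hprod₁⟩) (z, y, ⟨l₂.prod, hprod₂⟩) :=
    ⟨rfl, rfl, rfl, List.prod_append.symm⟩
  exact .branch hbranch (ih _ (by lia) h₁ hl.1 hprod₁ rfl) (ih _ (by lia) h₂ hl.2 hprod₂ rfl)

theorem Triangulates.yields_pathGrammar_iff (hB : Triangulates B)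
    (hE : ∀ x y g u, E x y g u → g ∈ B) (A : X × X × B) :
    (pathGrammar E B).Yields A w ↔ Reaches E A.1 A.2.1 A.2.2 w := by
  refine ⟨reaches_of_yields_pathGrammar, ?_⟩
  obtain ⟨x, y, g, hg⟩ := A
  rintro ⟨l, h, rfl⟩
  exact h.yields_pathGrammar hB (h.label_mem hE) hg

theorem Triangulates.exists_shrinkableBy [Finite X] (hB : Triangulates B) (hfin : B.Finite)
    (hE : ∀ x y g u, E x y g u → g ∈ B) (hread : ∀ x y g u, E x y g u → u.length ≤ 1)
    (x y : X) {g : G} (hg : g ∈ B) : ∃ N, ShrinkableBy N {w | Reaches E x y g w} := by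
  have := hfin.to_subtype
  have hleaf (A : X × X × B) (u : List α) (h : (pathGrammar E B).leaf A u) : u.length ≤ 1 := by
    obtain ⟨l, hl, -, hlen⟩ := h
    exact (hl.word_length_le hread).trans hlen
  have hlang : {w | Reaches E x y g w} = {w | (pathGrammar E B).Yields (x, y, ⟨g, hg⟩) w} :=
    Set.ext fun w => (hB.yields_pathGrammar_iff hE (x, y, ⟨g, hg⟩)).symm
  rw [hlang]
  exact BinaryGrammar.exists_shrinkableBy hleaf _

end Triangulation

section Subdivision

open scoped Pointwise

variable {X G α : Type*} [Monoid G]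

/-- The graph obtained from `E` by dividing the register operations into factors from `B`. The
vertex `(x, s)` stands for the vertex `x` of `E` with the register operation `s` still pending;
only a finite set `F` of pending operations is provided for. -/
inductive Subdivision (E : X → X → G → List α → Prop) (B F : Set G) :
    X × F → X × F → G → List α → Prop
  | read {x y : X} {s t : F} {u : List α} (hs : (s : G) = 1) (he : E x y t u) :
    Subdivision E B F (x, s) (y, t) 1 u
  | multiply {x : X} {s t : F} {b : G} (hb : b ∈ B) (hs : (s : G) = b * t) :
    Subdivision E B F (x, s) (x, t) b []

variable {E : X → X → G → List α → Prop} {B F : Set G} {w : List α}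

theorem Subdivision.exists_reaches {p p' : X × F} {g : G}
    (h : Reaches (Subdivision E B F) p p' g w) :
    ∃ m, Reaches E p.1 p'.1 m w ∧ p.2 * m = g * p'.2 := by
  induction h using Reaches.head_induction with
  | refl => exact ⟨1, .refl _, by simp⟩
  | head he _ ih =>
    obtain ⟨m, hr, hm⟩ := ih
    cases he with
    | read hs he => exact ⟨_, hr.head he, by rw [hs, hm, one_mul, one_mul]⟩
    | multiply hb hs => exact ⟨m, hr, by rw [hs, mul_assoc, hm, mul_assoc]⟩

theorem Subdivision.reaches_of_mem_pow (hone : 1 ∈ B) {n k : ℕ} (hk : k ≤ n) (x : X) {s : G}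
    (hs : s ∈ B ^ k) :
    Reaches (Subdivision E B (B ^ n)) (x, ⟨s, Set.pow_subset_pow_right hone hk hs⟩)
      (x, ⟨1, Set.one_mem_pow hone⟩) s [] := by
  induction k generalizing s with
  | zero =>
    obtain rfl : s = 1 := by simpa using hs
    exact .refl _
  | succ k ih =>
    obtain ⟨b, hb, t, ht, rfl⟩ := Set.mem_mul.1 (pow_succ' B k ▸ hs)
    simpa using Reaches.head (.multiply hb rfl) (ih (by lia) ht)

theorem Subdivision.reaches_iff (hone : 1 ∈ B) {n : ℕ} (hE : ∀ x y g u, E x y g u → g ∈ B ^ n)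
    {x y : X} {g : G} :
    Reaches (Subdivision E B (B ^ n)) (x, ⟨1, Set.one_mem_pow hone⟩)
      (y, ⟨1, Set.one_mem_pow hone⟩) g w ↔ Reaches E x y g w := by
  constructor
  · intro h
    obtain ⟨m, hr, hm⟩ := exists_reaches h
    obtain rfl : m = g := by simpa using hm
    exact hr
  · intro h
    induction h using Reaches.head_induction with
    | refl => exact .refl _
    | head he _ ih =>
      simpa using ((reaches_of_mem_pow hone le_rfl _ (hE _ _ _ _ he)).trans ih).head
        (.read rfl he)

theorem exists_subset_pow_of_closure_eq_top (hone : 1 ∈ B) (hgen : Submonoid.closure B = ⊤)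
    (hF : F.Finite) : ∃ n : ℕ, F ⊆ B ^ n := by
  have hpow (g : G) : ∃ n : ℕ, g ∈ B ^ n := by
    induction hgen ▸ Submonoid.mem_top g using Submonoid.closure_induction with
    | mem b hb => exact ⟨1, by rwa [pow_one]⟩
    | one => exact ⟨0, rfl⟩
    | mul g h _ _ ihg ihh =>
      obtain ⟨⟨m, hm⟩, ⟨n, hn⟩⟩ := And.intro ihg ihh
      exact ⟨m + n, pow_add B m n ▸ Set.mul_mem_mul hm hn⟩
  choose f hf using hpow
  obtain ⟨n, hn⟩ := (hF.image f).bddAbove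
  exact ⟨n, fun g hg => Set.pow_subset_pow_right hone (hn ⟨g, hg, rfl⟩) (hf g)⟩

theorem Subdivision.label_mem (hone : 1 ∈ B) {p p' : X × F} {g : G} {u : List α}
    (h : Subdivision E B F p p' g u) : g ∈ B := by
  cases h with
  | read => exact hone
  | multiply hb => exact hb

theorem Subdivision.word_length_le (hE : ∀ x y g u, E x y g u → u.length ≤ 1) {p p' : X × F}
    {g : G} {u : List α} (h : Subdivision E B F p p' g u) : u.length ≤ 1 := by
  cases h with
  | read _ he => exact hE _ _ _ _ he
  | multiply => exact zero_le_one

theorem finite_pow_set (hB : B.Finite) (n : ℕ) : (B ^ n).Finite := by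
  induction n with
  | zero => exact Set.finite_one
  | succ n ih => exact ih.mul hB

end Subdivision

theorem ShrinkableBy.mono {α : Type*} {N N' : ℕ} {L : Language α} (h : ShrinkableBy N L)
    (hN : N ≤ N') : ShrinkableBy N' L := by
  intro w hw hlong
  obtain ⟨w', hw', hsub, hlt, hle⟩ := h w hw (by lia)
  exact ⟨w', hw', hsub, hlt, by lia⟩

theorem ShrinkableBy.exists_of_mem_iff {α ι : Type*} [Finite ι] {S : Set ι} {K : ι → Language α}
    {L : Language α} (hK : ∀ i, ∃ N, ShrinkableBy N (K i)) (hL : ∀ w, w ∈ L ↔ ∃ i ∈ S, w ∈ K i) :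
    ∃ N, ShrinkableBy N L := by
  choose f hf using hK
  obtain ⟨N, hN⟩ := (Set.finite_range f).bddAbove
  refine ⟨N, fun w hw hlong => ?_⟩
  obtain ⟨i, hi, hwi⟩ := (hL w).1 hw
  obtain ⟨w', hw', h⟩ := (hf i).mono (hN ⟨i, rfl⟩) w hwi hlong
  exact ⟨w', (hL w').2 ⟨i, hi, hw'⟩, h⟩

open scoped Pointwise in
theorem GRecognizable.exists_shrinkableBy {G α : Type*} [Group G] {B : Set G}
    {L : Language α} (hL : GRecognizable G L) (hB : Triangulates B) (hfin : B.Finite)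
    (hone : 1 ∈ B) (hgen : Submonoid.closure B = ⊤) : ∃ N, ShrinkableBy N L := by
  obtain ⟨M, rfl⟩ := hL
  have := M.finQ
  obtain ⟨n, hn⟩ := exists_subset_pow_of_closure_eq_top hone hgen
    (M.finδ.image fun t => t.2.2.2)
  have := (finite_pow_set hfin n).to_subtype
  have hlabel (q q' g u) : M.Edge q q' g u → g ∈ B ^ n := by
    rintro ⟨_, hδ, -⟩
    exact hn ⟨_, hδ, rfl⟩
  have hread (q q' g u) : M.Edge q q' g u → u.length ≤ 1 := by
    rintro ⟨σ, -, rfl⟩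
    cases σ <;> simp
  refine ShrinkableBy.exists_of_mem_iff (K := fun q => {w | Reaches M.Edge M.q0 q 1 w})
    (fun q => ?_) fun w => M.mem_lang_iff
  simp only [← Subdivision.reaches_iff hone hlabel]
  exact hB.exists_shrinkableBy hfin (fun _ _ _ _ h => h.label_mem hone)
    (fun _ _ _ _ h => h.word_length_le hread) _ _ hone

theorem not_shrinkableBy_MULT (N : ℕ) : ¬ ShrinkableBy N MULT := by
  intro h
  obtain ⟨_, ⟨p, q, rfl⟩, hsub, hlt, hle⟩ :=
    h _ ⟨N + 1, N + 1, rfl⟩ (by simp only [List.length_append, List.length_replicate]; lia)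
  have hp : p ≤ N + 1 := by simpa [List.count_replicate] using hsub.count_le 0
  have hq : q ≤ N + 1 := by simpa [List.count_replicate] using hsub.count_le 1
  simp only [List.length_append, List.length_replicate] at hlt hle
  rcases hp.eq_or_lt with rfl | hp'
  · rcases hq.eq_or_lt with rfl | hq'
    · exact lt_irrefl _ hlt
    · nlinarith
  · nlinarith

section HalfSpace

variable {G : Type*}

theorem exists_crossing [Monoid G] {P : Set G} {k : G} {l : List G} (hk : k ∉ P)
    (hl : k * l.prod ∈ P) :
    ∃ l₁ b l₂, l = l₁ ++ b :: l₂ ∧ k * l₁.prod ∉ P ∧ k * l₁.prod * b ∈ P := by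
  induction l generalizing k with
  | nil => exact absurd hl (by simpa using hk)
  | cons b l ih =>
    by_cases hb : k * b ∈ P
    · exact ⟨[], b, l, rfl, by simpa using hk, by simpa using hb⟩
    · obtain ⟨l₁, c, l₂, rfl, h₁, h₂⟩ := ih hb (by simpa [mul_assoc] using hl)
      exact ⟨b :: l₁, c, l₂, rfl, by simpa [mul_assoc] using h₁, by simpa [mul_assoc] using h₂⟩

theorem exists_eq_cons_append_singleton {α : Type*} {l : List α} (hl : 2 ≤ l.length) :
    ∃ a m e, l = a :: (m ++ [e]) := by
  obtain ⟨a, t, rfl⟩ := List.exists_cons_of_length_pos (by lia : 0 < l.length)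
  have ht : t ≠ [] := by
    rintro rfl
    simp at hl
  exact ⟨a, t.dropLast, t.getLast ht, by rw [List.dropLast_append_getLast ht]⟩

variable [Group G] {A C : Subgroup G} {P B : Set G}

theorem HasSplit.of_subgroup (hA : (A : Set G) ⊆ B) {l₁ l₂ : List G} (hne₁ : l₁ ≠ [])
    (hne₂ : l₂ ≠ []) (hprod : (l₁ ++ l₂).prod ∈ A) (hprod₁ : l₁.prod ∈ A) :
    HasSplit B (l₁ ++ l₂) := by
  refine ⟨l₁, l₂, rfl, hne₁, hne₂, hA hprod₁, hA ?_⟩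
  rwa [List.prod_append, A.mul_mem_cancel_left hprod₁] at hprod

/-- `P` is the set of vertices `hC` lying on one side of the edge joining the vertices `A` and `C`
of the Bass–Serre tree of an amalgamated product of `A` and `C`. -/
structure IsHalfSpace (A C : Subgroup G) (P : Set G) : Prop where
  mul_mem_iff {h c : G} (hc : c ∈ C) : h * c ∈ P ↔ h ∈ P
  mul_mem_iff_of_notMem {h a : G} (ha : a ∈ A) (hh : h ∉ A) : h * a ∈ P ↔ h ∈ P
  mem_iff_of_mem {a : G} (ha : a ∈ A) : a ∈ P ↔ a ∈ C

namespace IsHalfSpace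

theorem one_mem (hP : IsHalfSpace A C P) : 1 ∈ P := (hP.mem_iff_of_mem A.one_mem).2 C.one_mem

theorem mem_of_crossing (hP : IsHalfSpace A C P) {h b : G} (hb : b ∈ (A ∪ C : Set G))
    (hcross : ¬ (h * b ∈ P ↔ h ∈ P)) : h ∈ A ∧ b ∈ A := by
  rcases hb with hb | hb
  · exact ⟨by_contra fun hh => hcross (hP.mul_mem_iff_of_notMem hb hh), hb⟩
  · exact absurd (hP.mul_mem_iff hb) hcross

theorem hasSplit_of_prod_mem_left (hP : IsHalfSpace A C P) {l : List G}
    (hl : ∀ b ∈ l, b ∈ (A ∪ C : Set G)) (hlen : 2 ≤ l.length) (hprod : l.prod ∈ A) :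
    HasSplit (A ∪ C : Set G) l := by
  obtain ⟨a, m, e, rfl⟩ := exists_eq_cons_append_singleton hlen
  rcases hl a List.mem_cons_self with ha | ha
  · exact .of_subgroup (l₁ := [a]) Set.subset_union_left (by simp) (by simp) hprod
      (by simpa using ha)
  by_cases hprodC : (a :: (m ++ [e])).prod ∈ C
  · exact .of_subgroup (l₁ := [a]) Set.subset_union_right (by simp) (by simp) hprodC
      (by simpa using ha)
  have hprodP : (a :: (m ++ [e])).prod ∉ P := fun h => hprodC ((hP.mem_iff_of_mem hprod).1 h)
  obtain ⟨l₁, b, l₂, heq, hbefore, hafter⟩ := exists_crossing (P := Pᶜ) (k := 1)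
    (not_not.2 hP.one_mem) (by rwa [one_mul])
  rw [Set.notMem_compl_iff, one_mul] at hbefore
  rw [Set.mem_compl_iff, one_mul] at hafter
  have hne : l₁ ≠ [] := by
    rintro rfl
    obtain ⟨rfl, -⟩ : a = b ∧ m ++ [e] = l₂ := by simpa using heq
    exact hafter ((hP.mul_mem_iff ha).2 hbefore)
  rw [heq] at hl hprod ⊢
  have hmem := (hP.mem_of_crossing (hl b (by simp)) fun h => hafter (h.2 hbefore)).1
  exact .of_subgroup Set.subset_union_left hne (by simp) hprod hmem

theorem hasSplit_of_prod_mem_right (hP : IsHalfSpace A C P) {l : List G}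
    (hl : ∀ b ∈ l, b ∈ (A ∪ C : Set G)) (hlen : 2 ≤ l.length) (hprod : l.prod ∈ C)
    (hprodA : l.prod ∉ A) : HasSplit (A ∪ C : Set G) l := by
  obtain ⟨a, m, e, rfl⟩ := exists_eq_cons_append_singleton hlen
  have hsplit {l₁ l₂ : List G} (heq : a :: (m ++ [e]) = l₁ ++ l₂) (h₁ : l₁ ≠ []) (h₂ : l₂ ≠ [])
      (hC : l₁.prod ∈ C) : HasSplit (A ∪ C : Set G) (a :: (m ++ [e])) := by
    rw [heq] at hprod ⊢
    exact .of_subgroup Set.subset_union_right h₁ h₂ hprod hC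
  have hprod_eq : (a :: (m ++ [e])).prod = a * m.prod * e := by simp [mul_assoc]
  by_cases haC : a ∈ C
  · exact hsplit (l₁ := [a]) rfl (by simp) (by simp) (by simpa using haC)
  by_cases heC : e ∈ C
  · refine hsplit (l₁ := a :: m) rfl (by simp) (by simp) ?_
    rwa [hprod_eq, C.mul_mem_cancel_right heC, ← List.prod_cons] at hprod
  have ha : a ∈ A := (hl a (by simp)).resolve_right haC
  have he : e ∈ A := (hl e (by simp)).resolve_right heC
  have hstart : a ∉ P := fun h => haC ((hP.mem_iff_of_mem ha).1 h)
  have hend : a * m.prod ∈ P := by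
    have hprodP := (hP.mul_mem_iff (h := 1) hprod).2 hP.one_mem
    rw [one_mul] at hprodP
    have := (hP.mul_mem_iff_of_notMem (A.inv_mem he) hprodA).2 hprodP
    rwa [hprod_eq, mul_inv_cancel_right] at this
  obtain ⟨l₁, b, l₂, rfl, hbefore, hafter⟩ := exists_crossing hstart hend
  obtain ⟨hmem, hb⟩ := hP.mem_of_crossing (hl b (by simp)) fun h => hbefore (h.1 hafter)
  refine hsplit (l₁ := a :: (l₁ ++ [b])) (l₂ := l₂ ++ [e]) (by simp) (by simp) (by simp) ?_
  simpa [mul_assoc] using (hP.mem_iff_of_mem (A.mul_mem hmem hb)).1 hafter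

theorem triangulates (hP : IsHalfSpace A C P) : Triangulates (A ∪ C : Set G) := by
  intro l hl hlen hprod
  by_cases hA : l.prod ∈ A
  · exact hP.hasSplit_of_prod_mem_left hl hlen hA
  · exact hP.hasSplit_of_prod_mem_right hl hlen (hprod.resolve_left hA) hA

end IsHalfSpace

theorem submonoid_closure_union_eq_top (h : A ⊔ C = ⊤) :
    Submonoid.closure (A ∪ C : Set G) = ⊤ := by
  have hclosure := Subgroup.closure_toSubmonoid (A ∪ C : Set G)
  rwa [Set.union_inv, inv_coe_set, inv_coe_set, Set.union_self, ← Subgroup.sup_eq_closure, h,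
    Subgroup.top_toSubmonoid, eq_comm] at hclosure

end HalfSpace

theorem comp_mul_eq_of_mem_zpowers {G β : Type*} [Group G] {f : G → β} {s : G}
    (hf : ∀ h, f (h * s) = f h) {c : G} (hc : c ∈ Subgroup.zpowers s) (h : G) :
    f (h * c) = f h := by
  obtain ⟨n, rfl⟩ := hc
  refine zpow_induction_right (P := fun c => f (h * c) = f h) (by rw [mul_one]) ?_ ?_ n
  · intro c hc
    rw [← mul_assoc, hf, hc]
  · intro c hc
    rw [← mul_assoc, ← hf, inv_mul_cancel_right, hc]

section FareyTree

open ModularGroup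
open scoped MatrixGroups

/-- The element of order `6` of `SL(2, ℤ)` that rotates the Farey triangle with vertices `0`, `∞`
and `1`. Together with `S` of order `4` it exhibits `SL(2, ℤ)` as an amalgam over `{1, -1}`. -/
def fareyRotation : SL(2, ℤ) := ⟨!![0, 1; -1, 1], by simp⟩

theorem coe_fareyRotation : (fareyRotation : Matrix (Fin 2) (Fin 2) ℤ) = !![0, 1; -1, 1] := rfl

/-- The sum of `p * q` over the vertices `p / q` of the image under `h` of the Farey triangle with
vertices `0`, `∞` and `1`. All vertices lie on the same side of the edge from `0` to `∞`, and the
sign of the sum tells on which one. -/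
def fareySide (h : SL(2, ℤ)) : ℤ :=
  h 0 0 * h 1 0 + h 0 1 * h 1 1 + (h 0 0 + h 0 1) * (h 1 0 + h 1 1)

/-- The contribution to `fareySide h` of the edge stabilized by `S`, from `0` to `∞`. -/
def fareyEdgeSide (h : SL(2, ℤ)) : ℤ := h 0 0 * h 1 0 + h 0 1 * h 1 1

theorem fareySide_mul_fareyRotation (h : SL(2, ℤ)) :
    fareySide (h * fareyRotation) = fareySide h := by
  simp only [fareySide, Matrix.SpecialLinearGroup.coe_mul, coe_fareyRotation, Matrix.mul_apply,
    Fin.sum_univ_two, Matrix.of_apply, Matrix.cons_val', Matrix.cons_val_zero, Matrix.cons_val_one,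
    Matrix.cons_val_fin_one]
  ring

theorem fareyEdgeSide_mul_S (h : SL(2, ℤ)) : fareyEdgeSide (h * S) = fareyEdgeSide h := by
  simp only [fareyEdgeSide, Matrix.SpecialLinearGroup.coe_mul, coe_S, Matrix.mul_apply,
    Fin.sum_univ_two, Matrix.of_apply, Matrix.cons_val', Matrix.cons_val_zero, Matrix.cons_val_one,
    Matrix.cons_val_fin_one]
  ring

theorem fareySide_pos_of_mem_zpowers_fareyRotation {c : SL(2, ℤ)}
    (hc : c ∈ Subgroup.zpowers fareyRotation) : 0 < fareySide c := by
  rw [← one_mul c, comp_mul_eq_of_mem_zpowers fareySide_mul_fareyRotation hc]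
  simp [fareySide]

/-- With `X = fareyEdgeSide h` and `Y = fareySide h - 2 * X`, the determinant condition gives
`Y ^ 2 ≤ X ^ 2 + 1`, so that `|Y| < 2 * |X|`. -/
theorem fareySide_pos_iff {h : SL(2, ℤ)} (hh : fareyEdgeSide h ≠ 0) :
    0 < fareySide h ↔ 0 < fareyEdgeSide h := by
  have hdet := h.det_coe
  rw [Matrix.det_fin_two] at hdet
  unfold fareySide
  unfold fareyEdgeSide at *
  generalize h 0 0 = a at *
  generalize h 0 1 = b at *
  generalize h 1 0 = c at *
  generalize h 1 1 = d at *
  have hX : 1 ≤ (a * c + b * d) ^ 2 := sq_pos_of_ne_zero hh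
  have hlt : (a * d + b * c) ^ 2 < (2 * (a * c + b * d)) ^ 2 := by
    have : (a * d + b * c) ^ 2 = 4 * (a * c) * (b * d) + 1 := by
      linear_combination (a * d - b * c + 1) * hdet
    nlinarith [sq_nonneg (a * c - b * d)]
  have hsplit : a * c + b * d + (a + b) * (c + d) = 2 * (a * c + b * d) + (a * d + b * c) := by
    ring
  rw [hsplit]
  generalize a * c + b * d = X at *
  have habs := sq_lt_sq.1 hlt
  rw [abs_lt] at habs
  rcases hh.lt_or_gt with hneg | hpos
  · rw [abs_of_neg (by lia)] at habs
    lia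
  · rw [abs_of_pos (by lia)] at habs
    lia

theorem mem_zpowers_S_of_fareyEdgeSide_eq_zero {h : SL(2, ℤ)} (hh : fareyEdgeSide h = 0) :
    h ∈ Subgroup.zpowers S := by
  have hdet := h.det_coe
  rw [Matrix.det_fin_two] at hdet
  unfold fareyEdgeSide at hh
  have hmat := Matrix.eta_fin_two h.1
  generalize h 0 0 = a at *
  generalize h 0 1 = b at *
  generalize h 1 0 = c at *
  generalize h 1 1 = d at *
  have hmul : (a ^ 2 + b ^ 2) * (c ^ 2 + d ^ 2) = 1 := by
    linear_combination (a * c + b * d) * hh + (a * d - b * c + 1) * hdet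
  have hnorm : a ^ 2 + b ^ 2 = 1 := Int.eq_one_of_mul_eq_one_right (by positivity) hmul
  obtain rfl : a = d := by linear_combination d * hnorm - a * hdet - b * hh
  obtain rfl : c = -b := by linear_combination a * hh - b * hdet - c * hnorm
  obtain ⟨ha, ha'⟩ := abs_le.1 ((sq_le_one_iff_abs_le_one a).1 (by nlinarith))
  obtain ⟨hb, hb'⟩ := abs_le.1 ((sq_le_one_iff_abs_le_one b).1 (by nlinarith))
  have hpow : ∃ k : Fin 4, h.1 = (S ^ (k : ℕ)).1 := by
    rw [hmat]
    interval_cases a <;> interval_cases b <;> first | decide | norm_num at hnorm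
  obtain ⟨k, hk⟩ := hpow
  exact Subtype.ext hk ▸ Subgroup.npow_mem_zpowers S k

theorem mem_zpowers_fareyRotation_of_mem_zpowers_S {a : SL(2, ℤ)} (ha : a ∈ Subgroup.zpowers S)
    (hside : 0 < fareySide a) : a ∈ Subgroup.zpowers fareyRotation := by
  have hsq (j : ℤ) : (S ^ 2) ^ j ∈ Subgroup.zpowers fareyRotation := by
    rw [(by decide : S ^ 2 = fareyRotation ^ 3)]
    exact zpow_mem (pow_mem (Subgroup.mem_zpowers _) 3) j
  obtain ⟨n, rfl⟩ := ha
  rcases Int.even_or_odd' n with ⟨j, rfl | rfl⟩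
  · simpa [zpow_mul] using hsq j
  · have hneg : fareySide (S ^ (2 * j + 1)) = -1 := by
      rw [add_comm, zpow_add, zpow_one, zpow_mul]
      exact (comp_mul_eq_of_mem_zpowers fareySide_mul_fareyRotation (hsq j) S).trans (by decide)
    exact absurd hside (by simp [hneg])

theorem isHalfSpace_fareySide_pos :
    IsHalfSpace (Subgroup.zpowers S) (Subgroup.zpowers fareyRotation) {h | 0 < fareySide h} where
  mul_mem_iff hc := by
    rw [Set.mem_ofPred_eq, Set.mem_ofPred_eq,
      comp_mul_eq_of_mem_zpowers fareySide_mul_fareyRotation hc]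
  mul_mem_iff_of_notMem {h a} ha hh := by
    have hne : fareyEdgeSide h ≠ 0 := fun h₀ => hh (mem_zpowers_S_of_fareyEdgeSide_eq_zero h₀)
    have heq := comp_mul_eq_of_mem_zpowers fareyEdgeSide_mul_S ha h
    rw [Set.mem_ofPred_eq, Set.mem_ofPred_eq, fareySide_pos_iff hne, fareySide_pos_iff (heq ▸ hne),
      heq]
  mem_iff_of_mem ha :=
    ⟨mem_zpowers_fareyRotation_of_mem_zpowers_S ha, fareySide_pos_of_mem_zpowers_fareyRotation⟩

theorem zpowers_S_sup_zpowers_fareyRotation :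
    Subgroup.zpowers S ⊔ Subgroup.zpowers fareyRotation = ⊤ := by
  rw [eq_top_iff, ← SpecialLinearGroup.SL2Z_generators, Subgroup.closure_le]
  have hS : S ∈ Subgroup.zpowers S ⊔ Subgroup.zpowers fareyRotation :=
    Subgroup.mem_sup_left (Subgroup.mem_zpowers S)
  rintro _ (rfl | rfl)
  · exact hS
  · rw [(by decide : T = fareyRotation ^ 2 * S)]
    exact mul_mem (Subgroup.mem_sup_right (pow_mem (Subgroup.mem_zpowers _) 2)) hS

theorem finite_zpowers_S_union_zpowers_fareyRotation :
    (Subgroup.zpowers S ∪ Subgroup.zpowers fareyRotation : Set SL(2, ℤ)).Finite := by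
  refine .union ?_ ?_
  · exact finite_zpowers.2 (isOfFinOrder_iff_pow_eq_one.2 ⟨4, by norm_num, by decide⟩)
  · exact finite_zpowers.2 (isOfFinOrder_iff_pow_eq_one.2 ⟨6, by norm_num, by decide⟩)

theorem GRecognizable.exists_shrinkableBy_of_SL2Z {α : Type*} {L : Language α}
    (hL : GRecognizable SL(2, ℤ) L) : ∃ N, ShrinkableBy N L :=
  hL.exists_shrinkableBy isHalfSpace_fareySide_pos.triangulates
    finite_zpowers_S_union_zpowers_fareyRotation (.inl (one_mem _))
    (submonoid_closure_union_eq_top zpowers_S_sup_zpowers_fareyRotation)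

end FareyTree

theorem SL2Z_lt_SL3Z_general :
    (∀ (α : Type*) (L : Language α),
      GRecognizable (Matrix.SpecialLinearGroup (Fin 2) ℤ) L →
        GRecognizable (Matrix.SpecialLinearGroup (Fin 3) ℤ) L) ∧
    GRecognizable (Matrix.SpecialLinearGroup (Fin 3) ℤ) MULT ∧
    ¬ GRecognizable (Matrix.SpecialLinearGroup (Fin 2) ℤ) MULT := by
  refine ⟨fun α L hL => ?_, ⟨loopAutomaton multLoops, lang_loopAutomaton_multLoops⟩, fun hL => ?_⟩
  · let e : Fin 2 ⊕ Fin 1 ≃ Fin 3 := finSumFinEquiv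
    exact hL.of_injective (slBlockHom e) (slBlockHom_injective e)
  · obtain ⟨N, hN⟩ := hL.exists_shrinkableBy_of_SL2Z
    exact not_shrinkableBy_MULT N hN

/-- `𝔏(SL(2,ℤ)) ⊊ 𝔏(SL(3,ℤ))`. -/
theorem SL2Z_lt_SL3Z :
    (∀ (α : Type) [Fintype α] (L : Language α),
      GRecognizable (Matrix.SpecialLinearGroup (Fin 2) ℤ) L →
        GRecognizable (Matrix.SpecialLinearGroup (Fin 3) ℤ) L) ∧
    GRecognizable (Matrix.SpecialLinearGroup (Fin 3) ℤ) MULT ∧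
    ¬ GRecognizable (Matrix.SpecialLinearGroup (Fin 2) ℤ) MULT := by
  exact ⟨fun α _ L => SL2Z_lt_SL3Z_general.{0}.1 α L, SL2Z_lt_SL3Z_general.{0}.2⟩
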